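/- Suppose r_i β_i⁺ e^{d_i⁺ r_i} < e for each i = 1,…,m, and let r = max(r₁,…,r_m). Then: (1) for every t ∈ ℝ and φ, ψ ∈ X with φ ≤_B ψ and φ_i(s) < ψ_i(s) for all i and s, one has f_i(t,ψ) − f_i(t,φ) > −μ_i(ψ_i(0) − φ_i(0)) for each i; (2) if φ ∈ X₊, then 0 ≤_B y_t(φ) for every t ≥ r; and (3) if φ ∈ X₊ with φ(0) ≫ 0 (all components φ_i(0) > 0), then y_t(φ) ≫_B 0 for every t ≥ 2r. -/

import Mathlib

open MeasureTheory Filter Topology Set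

noncomputable section

namespace Nicholson

/-- An almost periodic function: continuous, with a relatively dense set of
`ε`-periods for every `ε > 0`. -/
def AlmostPeriodic (f : ℝ → ℝ) : Prop :=
  Continuous f ∧ ∀ ε > 0, ∃ L > 0, ∀ a : ℝ, ∃ s ∈ Set.Icc a (a + L),
    ∀ t, |f (t + s) - f t| < ε

/-- The phase space `X = C([-r₁,0]) × ⋯ × C([-r_m,0])` (as plain functions;
continuity is carried by the solutions). -/
abbrev XN (m : ℕ) (r : Fin m → ℝ) := ∀ i : Fin m, Set.Icc (-(r i)) (0:ℝ) → ℝ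

/-- The cone `X₊` of componentwise nonnegative functions. -/
def XPos {m : ℕ} {r : Fin m → ℝ} (φ : XN m r) : Prop := ∀ i s, 0 ≤ φ i s

/-- The point `0 ∈ [-rᵢ,0]`. -/
def pt0N {m : ℕ} (r : Fin m → ℝ) (hr : ∀ i, 0 < r i) (i : Fin m) :
    Set.Icc (-(r i)) (0:ℝ) :=
  ⟨0, Set.mem_Icc.mpr ⟨by linarith [hr i], le_rfl⟩⟩

/-- The point `-rᵢ ∈ [-rᵢ,0]`. -/
def ptnegN {m : ℕ} (r : Fin m → ℝ) (hr : ∀ i, 0 < r i) (i : Fin m) :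
    Set.Icc (-(r i)) (0:ℝ)  :=
  ⟨-(r i), Set.mem_Icc.mpr ⟨le_rfl, by linarith [hr i]⟩⟩

/-- Conditions (a1)-(a6) on the coefficients of the Nicholson system. -/
def NicholsonHyps (m : ℕ) (d : Fin m → ℝ → ℝ) (a : Fin m → Fin m → ℝ → ℝ)
    (β c : Fin m → ℝ → ℝ) : Prop :=
  (∀ i, AlmostPeriodic (d i)) ∧ (∀ i j, AlmostPeriodic (a i j)) ∧
  (∀ i, AlmostPeriodic (β i)) ∧ (∀ i, AlmostPeriodic (c i)) ∧
  (∃ d₀ > 0, ∀ i t, d₀ ≤ d i t) ∧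
  (∀ i j t, 0 ≤ a i j t) ∧ (∀ i t, a i i t = 0) ∧
  (∀ i t, 0 < β i t) ∧
  (∃ c₀ > 0, ∀ i t, c₀ ≤ c i t) ∧
  (∀ i t, 0 < d i t - ∑ j, a j i t)

/-- The right-hand side of the `i`-th Nicholson equation along a function `y`. -/
def rhs {m : ℕ} (d : Fin m → ℝ → ℝ) (a : Fin m → Fin m → ℝ → ℝ) (β c : Fin m → ℝ → ℝ)
    (r : Fin m → ℝ) (i : Fin m) (t : ℝ) (y : ℝ → Fin m → ℝ) : ℝ :=
  -(d i t) * y t i + (∑ j, a i j t * y t j) +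
    β i t * y (t - r i) i * Real.exp (-(c i t * y (t - r i) i))

/-- `y` is the solution of the Nicholson system with initial value `φ ∈ X`. -/
def SolN {m : ℕ} (d : Fin m → ℝ → ℝ) (a : Fin m → Fin m → ℝ → ℝ) (β c : Fin m → ℝ → ℝ)
    (r : Fin m → ℝ) (φ : XN m r) (y : ℝ → Fin m → ℝ) : Prop :=
  (∀ i, ContinuousOn (fun t => y t i) (Set.Ici (-(r i)))) ∧
  (∀ i (s : Set.Icc (-(r i)) (0:ℝ)), y (s : ℝ) i = φ i s) ∧
  ∀ i t, 0 ≤ t → HasDerivWithinAt (fun u => y u i) (rhs d a β c r i t y) (Set.Ici t) t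

/-- `b` is an entire (globally defined) solution of the Nicholson system. -/
def EntireSolN {m : ℕ} (d : Fin m → ℝ → ℝ) (a : Fin m → Fin m → ℝ → ℝ)
    (β c : Fin m → ℝ → ℝ) (r : Fin m → ℝ) (b : ℝ → Fin m → ℝ) : Prop :=
  ∀ i t, HasDerivAt (fun u => b u i) (rhs d a β c r i t b) t

/-- The segment `y_t ∈ X` of `y`. -/
def segN {m : ℕ} (r : Fin m → ℝ) (y : ℝ → Fin m → ℝ) (t : ℝ) : XN m r :=
  fun i s => y (t + (s : ℝ)) i

/-- The exponential order `φ ≤_B ψ` for `B = diag(-μ₁,…,-μ_m)`. -/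
def expLeN {m : ℕ} (μ : Fin m → ℝ) {r : Fin m → ℝ} (φ ψ : XN m r) : Prop :=
  (∀ i s, φ i s ≤ ψ i s) ∧
  ∀ i, ∀ s t : Set.Icc (-(r i)) (0:ℝ), (s : ℝ) ≤ (t : ℝ) →
    (ψ i s - φ i s) * Real.exp (μ i * (s : ℝ)) ≤ (ψ i t - φ i t) * Real.exp (μ i * (t : ℝ))

/-- The zero element of `X`. -/
def zeroN (m : ℕ) (r : Fin m → ℝ) : XN m r := fun _ _ => 0

/-- Extension of the `i`-th component of `φ` to `ℝ` by the projection onto `[-rᵢ,0]`. -/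
def extN {m : ℕ} {r : Fin m → ℝ} (hr : ∀ i, 0 < r i) (φ : XN m r) (i : Fin m) : ℝ → ℝ :=
  fun s => φ i (Set.projIcc (-(r i)) 0 (by linarith [hr i]) s)

/-- `φ ≫_B 0`: `φ` is Lipschitz, `φᵢ(-rᵢ) > 0` and
`ess inf (φᵢ' + μᵢ φᵢ) > 0` on `[-rᵢ,0]` for each `i`. -/
def strPosN {m : ℕ} {r : Fin m → ℝ} (hr : ∀ i, 0 < r i) (μ : Fin m → ℝ)
    (φ : XN m r) : Prop :=
  (∀ i, ∃ K, LipschitzWith K (φ i)) ∧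
  (∀ i, 0 < φ i (ptnegN r hr i)) ∧
  ∀ i, ∃ ε > 0, ∀ᵐ s ∂(volume.restrict (Set.Ioo (-(r i)) (0:ℝ))),
    DifferentiableAt ℝ (extN hr φ i) s ∧
    ε ≤ deriv (extN hr φ i) s + μ i * extN hr φ i s

/-- The Nicholson nonlinearity `fᵢ(t,φ)`. -/
def fN {m : ℕ} (d : Fin m → ℝ → ℝ) (a : Fin m → Fin m → ℝ → ℝ) (β c : Fin m → ℝ → ℝ)
    (r : Fin m → ℝ) (hr : ∀ i, 0 < r i) (i : Fin m) (t : ℝ) (φ : XN m r) : ℝ :=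
  -(d i t) * φ i (pt0N r hr i) + (∑ j, a i j t * φ j (pt0N r hr j)) +
    β i t * φ i (ptnegN r hr i) * Real.exp (-(c i t * φ i (ptnegN r hr i)))

/-- The supremum over `ℝ` of a real function. -/
def supR (f : ℝ → ℝ) : ℝ := sSup (Set.range f)

/-- The exponents `μᵢ = (1/rᵢ) ln(e²/(rᵢ βᵢ⁺))`. -/
def muN {m : ℕ} (r : Fin m → ℝ) (β : Fin m → ℝ → ℝ) (i : Fin m) : ℝ :=
  (1 / r i) * Real.log (Real.exp 2 / (r i * supR (β i)))

end Nicholson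

namespace Nicholson

lemma ap_bdd {f : ℝ → ℝ} (hf : AlmostPeriodic f) : BddAbove (Set.range f) := by
  obtain ⟨hc, h⟩ := hf
  obtain ⟨L, hL, h⟩ := h 1 one_pos
  obtain ⟨M, hM⟩ := (isCompact_Icc (a := (0:ℝ)) (b := L)).bddAbove_image hc.continuousOn
  refine ⟨M + 1, ?_⟩
  rintro _ ⟨t, rfl⟩
  obtain ⟨s, hs, h1⟩ := h (-t)
  have h2 := h1 t
  have h3 : f (t + s) ≤ M := hM ⟨t + s, ⟨by linarith [hs.1], by linarith [hs.2]⟩, rfl⟩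
  have := (abs_lt.1 h2).1
  linarith

lemma le_supR {f : ℝ → ℝ} (hf : AlmostPeriodic f) (t : ℝ) : f t ≤ supR f :=
  le_csSup (ap_bdd hf) ⟨t, rfl⟩

lemma ricker {c : ℝ} {x y : ℝ} (hxy : x ≤ y) :
    -Real.exp (-2) * (y - x) ≤ y * Real.exp (-(c * y)) - x * Real.exp (-(c * x)) := by
  have hd : ∀ x, HasDerivAt (fun x => x * Real.exp (-(c * x)) + Real.exp (-2) * x)
      ((1 * Real.exp (-(c * x)) + x * (Real.exp (-(c * x)) * (-(c * 1)))) + Real.exp (-2) * 1) x := by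
    intro x
    exact ((hasDerivAt_id' x).mul (((hasDerivAt_id' x).const_mul c).neg.exp)).add
      ((hasDerivAt_id' x).const_mul _)
  have hm : Monotone (fun x => x * Real.exp (-(c * x)) + Real.exp (-2) * x) := by
    apply monotone_of_deriv_nonneg (fun x => (hd x).differentiableAt)
    intro x
    rw [(hd x).deriv]
    have h1 := Real.add_one_le_exp (c * x - 2)
    have h2 : Real.exp (-2) = Real.exp (c * x - 2) * Real.exp (-(c * x)) := by
      rw [← Real.exp_add]; congr 1; ring
    rw [h2]
    nlinarith [Real.exp_pos (-(c * x))]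
  have := hm hxy
  simp only at this
  linarith

lemma exp_mono {f F : ℝ → ℝ} {a b k : ℝ} (hab : a ≤ b) (hc : ContinuousOn f (Icc a b))
    (hd : ∀ t ∈ Ico a b, HasDerivWithinAt f (F t) (Ici t) t)
    (hF : ∀ t ∈ Ico a b, 0 ≤ F t + k * f t) :
    f a * Real.exp (k * a) ≤ f b * Real.exp (k * b) := by
  have hd' : ∀ t ∈ Ico a b, HasDerivWithinAt (fun t => f t * Real.exp (k * t))
      (F t * Real.exp (k * t) + f t * (Real.exp (k * t) * (k * 1))) (Ici t) t := by
    intro t ht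
    exact (hd t ht).mul (((hasDerivAt_id' t).const_mul k).exp.hasDerivWithinAt)
  have := image_le_of_deriv_right_le_deriv_boundary
    (f := fun _ => f a * Real.exp (k * a)) (f' := fun _ => 0) (a := a) (b := b)
    continuousOn_const (fun x _ => hasDerivWithinAt_const _ _ _) (B := fun t => f t * Real.exp (k * t))
    le_rfl (hc.mul (by fun_prop)) hd' (by
      intro t ht
      nlinarith [hF t ht, Real.exp_pos (k * t), mul_nonneg (hF t ht) (Real.exp_pos (k * t)).le])
  exact this (right_mem_Icc.2 hab)

lemma nonneg_step {m : ℕ} {y : ℝ → Fin m → ℝ} {F : Fin m → ℝ → ℝ} {d : Fin m → ℝ → ℝ}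
    {a : Fin m → Fin m → ℝ → ℝ} {T T' K : ℝ}
    (hc : ∀ i, ContinuousOn (fun t => y t i) (Icc T T')) (h0 : ∀ i, 0 ≤ y T i)
    (hd : ∀ i t, 0 < d i t) (ha : ∀ i j t, 0 ≤ a i j t) (hK : ∀ i t, ∑ j, a i j t ≤ K)
    (hder : ∀ i, ∀ t ∈ Ico T T', HasDerivWithinAt (fun u => y u i) (F i t) (Ici t) t)
    (hF : ∀ i, ∀ t ∈ Ico T T', -(d i t) * y t i + ∑ j, a i j t * y t j ≤ F i t) :
    ∀ i, ∀ t ∈ Icc T T', 0 ≤ y t i := by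
  have key : ∀ ε > 0, ∀ t ∈ Icc T T', ∀ i, 0 ≤ y t i + ε * Real.exp (K * t) := by
    intro ε hε
    have hzc : ∀ i, ContinuousOn (fun t => y t i + ε * Real.exp (K * t)) (Icc T T') :=
      fun i => (hc i).add (by fun_prop)
    have hcl : IsClosed ({t | ∀ i, 0 ≤ y t i + ε * Real.exp (K * t)} ∩ Icc T T') := by
      have : ({t | ∀ i, 0 ≤ y t i + ε * Real.exp (K * t)} ∩ Icc T T')
          = Icc T T' ∩ (fun t => fun i => y t i + ε * Real.exp (K * t)) ⁻¹' (Ici 0) := by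
        ext t; simp [Pi.le_def, and_comm]
      rw [this]
      exact (continuousOn_pi.2 hzc).preimage_isClosed_of_isClosed isClosed_Icc isClosed_Ici
    refine fun t ht => hcl.Icc_subset_of_forall_mem_nhdsWithin ?_ ?_ ht
    · intro i
      have := h0 i
      positivity
    · rintro x ⟨hx, hxI⟩
      have : ∀ i, ∀ᶠ t in 𝓝[>] x, 0 ≤ y t i + ε * Real.exp (K * t) := by
        intro i
        have hdz : HasDerivWithinAt (fun t => y t i + ε * Real.exp (K * t))
            (F i x + ε * (Real.exp (K * x) * (K * 1))) (Ici x) x :=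
          (hder i x hxI).add ((((hasDerivAt_id' x).const_mul K).exp.const_mul ε).hasDerivWithinAt)
        rcases (hx i).lt_or_eq with hpos | hz
        · have h1 : Tendsto (fun t => y t i + ε * Real.exp (K * t)) (𝓝[>] x)
            (𝓝 (y x i + ε * Real.exp (K * x))) :=
            hdz.continuousWithinAt.mono_left (nhdsWithin_mono _ Ioi_subset_Ici_self)
          exact (h1.eventually (lt_mem_nhds hpos)).mono fun _ h => le_of_lt h
        · set δ := ε * Real.exp (K * x) with hδ
          have hδ0 : 0 < δ := by positivity
          have hsum : -(K * δ) ≤ ∑ j, a i j x * y x j := by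
            have h1 : ∑ j, a i j x * (-δ) ≤ ∑ j, a i j x * y x j := by
              apply Finset.sum_le_sum
              intro j _
              exact mul_le_mul_of_nonneg_left (by have := hx j; linarith) (ha i j x)
            rw [← Finset.sum_mul] at h1
            nlinarith [hK i x]
          have hyi : y x i = -δ := by linarith
          have h2 := hF i x hxI
          have hpos : 0 < F i x + ε * (Real.exp (K * x) * (K * 1)) := by
            have : ε * (Real.exp (K * x) * (K * 1)) = K * δ := by rw [hδ]; ring
            rw [this]
            rw [hyi] at h2
            nlinarith [mul_pos (hd i x) hδ0]
          have h3 := (hasDerivWithinAt_iff_tendsto_slope' (self_notMem_Ioi)).1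
            (hdz.mono Ioi_subset_Ici_self)
          filter_upwards [h3.eventually (lt_mem_nhds hpos), self_mem_nhdsWithin] with t ht htx
          rw [slope_def_field, ← hδ, ← hz, sub_zero] at ht
          have h4 : 0 < t - x := sub_pos.2 htx
          exact ((div_pos_iff_of_pos_right h4).1 ht).le
      exact (eventually_all.2 this)
  intro i t ht
  by_contra hneg
  push Not at hneg
  have := key (-(y t i) / 2 / Real.exp (K * t)) (by
    have : 0 < -(y t i) := by linarith
    positivity) t ht i
  rw [div_mul_cancel₀ _ (Real.exp_pos _).ne'] at this
  linarith

lemma sol_nonneg {m : ℕ}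
    {d : Fin m → ℝ → ℝ} {a : Fin m → Fin m → ℝ → ℝ} {β c : Fin m → ℝ → ℝ}
    {r : Fin m → ℝ} (hr : ∀ i, 0 < r i) (hN : NicholsonHyps m d a β c)
    {φ : XN m r} (hφ : XPos φ) {y : ℝ → Fin m → ℝ} (hy : SolN d a β c r φ y) :
    ∀ i t, -(r i) ≤ t → 0 ≤ y t i := by
  obtain ⟨hdA, haA, hβA, hcA, ⟨d0, hd0, hd⟩, ha, haii, hβ, ⟨c0, hc0, hc⟩, hda⟩ := hN
  obtain ⟨yc, y0, yd⟩ := hy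
  obtain ⟨ρ, hρ, hρr⟩ : ∃ ρ > 0, ∀ i, ρ ≤ r i := by
    rcases isEmpty_or_nonempty (Fin m) with h | h
    · exact ⟨1, one_pos, fun i => h.elim i⟩
    · obtain ⟨i, hi⟩ := Finite.exists_min r
      exact ⟨r i, hr i, hi⟩
  have h0 : ∀ i t, -(r i) ≤ t → t ≤ 0 → 0 ≤ y t i := by
    intro i t h1 h2
    have := y0 i ⟨t, h1, h2⟩
    simp only at this
    rw [this]; exact hφ i _
  have hKi : ∀ i t, ∑ j, a i j t ≤ ∑ i, ∑ j, supR (a i j) := by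
    intro i t
    refine (Finset.sum_le_sum fun j _ => le_supR (haA i j) t).trans ?_
    refine Finset.single_le_sum (f := fun i => ∑ j, supR (a i j)) (fun i _ => ?_) (Finset.mem_univ i)
    exact Finset.sum_nonneg fun j _ => (ha i j 0).trans (le_supR (haA i j) 0)
  have step : ∀ n : ℕ, ∀ i t, -(r i) ≤ t → t ≤ n * ρ → 0 ≤ y t i := by
    intro n
    induction n with
    | zero => simpa using h0
    | succ n ih =>
      intro i t h1 h2
      push_cast at h2
      have hnρ : 0 ≤ n * ρ := by positivity
      rcases le_total t (n * ρ) with h | h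
      · exact ih i t h1 h
      · refine nonneg_step (y := y) (T := n * ρ) (T' := (n + 1) * ρ) (d := d) (a := a)
          (F := fun i t => rhs d a β c r i t y) ?_ ?_ (fun i t => hd0.trans_le (hd i t)) ha hKi ?_ ?_
          i t ⟨h, h2⟩
        · intro i
          refine (yc i).mono fun s hs => ?_
          have := hr i
          simp only [mem_Ici]; linarith [hs.1]
        · intro i
          exact ih i _ (by linarith [hr i]) le_rfl
        · intro i t ht
          exact yd i t (hnρ.trans ht.1)
        · intro i t ht
          have h3 : 0 ≤ y (t - r i) i := ih i _ (by linarith [ht.1]) (by linarith [ht.2, hρr i])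
          have h4 : 0 ≤ β i t * y (t - r i) i * Real.exp (-(c i t * y (t - r i) i)) := by
            have := hβ i t
            positivity
          simp only [rhs]
          linarith
  intro i t ht
  obtain ⟨n, hn⟩ := exists_nat_ge (t / ρ)
  exact step n i t ht ((div_le_iff₀ hρ).1 hn)

lemma rhs_ge {m : ℕ}
    {d : Fin m → ℝ → ℝ} {a : Fin m → Fin m → ℝ → ℝ} {β c : Fin m → ℝ → ℝ}
    {r : Fin m → ℝ} (hr : ∀ i, 0 < r i) (hN : NicholsonHyps m d a β c)
    {y : ℝ → Fin m → ℝ} (hy : ∀ i t, -(r i) ≤ t → 0 ≤ y t i) (i : Fin m) (t : ℝ) (ht : 0 ≤ t) :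
    -(supR (d i)) * y t i ≤ rhs d a β c r i t y := by
  obtain ⟨hdA, haA, hβA, hcA, ⟨d0, hd0, hd⟩, ha, haii, hβ, ⟨c0, hc0, hc⟩, hda⟩ := hN
  have h3 : 0 ≤ y (t - r i) i := hy i _ (by linarith)
  have h4 : 0 ≤ β i t * y (t - r i) i * Real.exp (-(c i t * y (t - r i) i)) := by
    have := hβ i t
    positivity
  have h5 : 0 ≤ ∑ j, a i j t * y t j :=
    Finset.sum_nonneg fun j _ => mul_nonneg (ha i j t) (hy j t (by linarith [hr j]))
  have h6 := le_supR (hdA i) t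
  have h7 := hy i t (by linarith [hr i])
  simp only [rhs]
  nlinarith

lemma exp_mu {r b : ℝ} (hr : 0 < r) (hb : 0 < b) :
    Real.exp ((1 / r) * Real.log (Real.exp 2 / (r * b)) * r) = Real.exp 2 / (r * b) := by
  have : (1 / r) * Real.log (Real.exp 2 / (r * b)) * r = Real.log (Real.exp 2 / (r * b)) := by
    field_simp
  rw [this, Real.exp_log (by positivity)]

lemma mu_gt {r b D : ℝ} (hr : 0 < r) (hb : 0 < b)
    (h : r * b * Real.exp (D * r) < Real.exp 1) :
    1 / r + D < (1 / r) * Real.log (Real.exp 2 / (r * b)) := by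
  have h1 : 1 + D * r < Real.log (Real.exp 2 / (r * b)) := by
    rw [Real.lt_log_iff_exp_lt (by positivity), lt_div_iff₀ (by positivity), Real.exp_add]
    have : Real.exp 2 = Real.exp 1 * Real.exp 1 := by rw [← Real.exp_add]; norm_num
    rw [this]
    nlinarith [Real.exp_pos 1]
  have : 1 / r + D = (1 / r) * (1 + D * r) := by field_simp
  rw [this]
  exact mul_lt_mul_of_pos_left h1 (by positivity)

/-- under the strict condition `rᵢ βᵢ⁺ e^{dᵢ⁺ rᵢ} < e`, the strengthened
quasimonotone condition holds; moreover `y_t(φ) ≥_B 0` for `t ≥ r` when `φ ∈ X₊`, and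
`y_t(φ) ≫_B 0` for `t ≥ 2r` when in addition `φ(0) ≫ 0`. -/
theorem statement16
    {m : ℕ} (hm : 1 ≤ m)
    (d : Fin m → ℝ → ℝ) (a : Fin m → Fin m → ℝ → ℝ) (β c : Fin m → ℝ → ℝ)
    (r : Fin m → ℝ) (hr : ∀ i, 0 < r i)
    (hN : NicholsonHyps m d a β c)
    (hcond : ∀ i, r i * supR (β i) * Real.exp (supR (d i) * r i) < Real.exp 1) :
    -- (1) strengthened quasimonotonicity (condition (F3))
    (∀ (t : ℝ) (φ ψ : XN m r), expLeN (muN r β) φ ψ → (∀ i s, φ i s < ψ i s) →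
      ∀ i, -(muN r β i) * (ψ i (pt0N r hr i) - φ i (pt0N r hr i)) <
        fN d a β c r hr i t ψ - fN d a β c r hr i t φ) ∧
    -- (2) entering the cone K_B after time r = max rᵢ
    (∀ φ : XN m r, XPos φ → ∀ y : ℝ → Fin m → ℝ, SolN d a β c r φ y →
      ∀ t : ℝ, (∀ i, r i ≤ t) → expLeN (muN r β) (zeroN m r) (segN r y t)) ∧
    -- (3) entering the interior of the cone after time 2r
    ∀ φ : XN m r, XPos φ → (∀ i, 0 < φ i (pt0N r hr i)) →
      ∀ y : ℝ → Fin m → ℝ, SolN d a β c r φ y →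
        ∀ t : ℝ, (∀ i, 2 * r i ≤ t) → strPosN hr (muN r β) (segN r y t) := by
  have hN' := hN
  obtain ⟨hdA, haA, hβA, hcA, ⟨d0, hd0, hd⟩, ha, haii, hβ, ⟨c0, hc0, hc⟩, hda⟩ := hN'
  have hβs : ∀ i, 0 < supR (β i) := fun i => (hβ i 0).trans_le (le_supR (hβA i) 0)
  have hmu : ∀ i, 1 / r i + supR (d i) < muN r β i := fun i => mu_gt (hr i) (hβs i) (hcond i)
  have hmu' : ∀ i, supR (d i) < muN r β i := fun i => by
    have := hmu i
    have h2 : 0 < 1 / r i := one_div_pos.2 (hr i)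
    linarith
  refine ⟨?_, ?_, ?_⟩
  · intro t φ ψ hle hlt i
    have h0 := hlt i (pt0N r hr i)
    have h1 := hlt i (ptnegN r hr i)
    have h2 := hle.2 i (ptnegN r hr i) (pt0N r hr i) (by simp [ptnegN, pt0N, (hr i).le])
    have hs : ∑ j, a i j t * φ j (pt0N r hr j) ≤ ∑ j, a i j t * ψ j (pt0N r hr j) :=
      Finset.sum_le_sum fun j _ => mul_le_mul_of_nonneg_left (hlt j _).le (ha i j t)
    have hR := ricker (c := c i t) h1.le
    have hE : Real.exp (muN r β i * r i) = Real.exp 2 / (r i * supR (β i)) := exp_mu (hr i) (hβs i)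
    have e1 : ((ptnegN r hr i : Set.Icc (-(r i)) (0:ℝ)) : ℝ) = -(r i) := rfl
    have e2 : ((pt0N r hr i : Set.Icc (-(r i)) (0:ℝ)) : ℝ) = 0 := rfl
    rw [e1, e2, mul_zero, Real.exp_zero, mul_one, mul_neg, Real.exp_neg, hE] at h2
    simp only [fN]
    generalize φ i (pt0N r hr i) = p0 at *
    generalize ψ i (pt0N r hr i) = q0 at *
    generalize φ i (ptnegN r hr i) = p1 at *
    generalize ψ i (ptnegN r hr i) = q1 at *
    have hbs := hβs i
    have hri := hr i
    have h3 : supR (β i) * Real.exp (-2) * (q1 - p1) ≤ 1 / r i * (q0 - p0) := by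
      rw [Real.exp_neg]
      rw [inv_div] at h2
      calc supR (β i) * (Real.exp 2)⁻¹ * (q1 - p1)
          = 1 / r i * ((q1 - p1) * (r i * supR (β i) / Real.exp 2)) := by field_simp
        _ ≤ _ := mul_le_mul_of_nonneg_left h2 (by positivity)
    have h4 : β i t * (Real.exp (-2) * (q1 - p1)) ≤ supR (β i) * (Real.exp (-2) * (q1 - p1)) :=
      mul_le_mul_of_nonneg_right (le_supR (hβA i) t)
        (mul_nonneg (Real.exp_pos _).le (by linarith))
    have h5 := mul_le_mul_of_nonneg_left hR (hβ i t).le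
    have h6 : d i t * (q0 - p0) ≤ supR (d i) * (q0 - p0) :=
      mul_le_mul_of_nonneg_right (le_supR (hdA i) t) (by linarith)
    have h7 := mul_lt_mul_of_pos_right (hmu i) (sub_pos.2 h0)
    nlinarith
  · intro φ hφ y hy t ht
    have hnn := sol_nonneg hr hN hφ hy
    refine ⟨fun i s => hnn i _ (by have := s.2.1; have := ht i; have := hr i; linarith), ?_⟩
    intro i s u hsu
    have hs := s.2.1
    have hti := ht i
    have hri := hr i
    simp only [zeroN, segN, sub_zero]
    have := exp_mono (f := fun v => y v i) (F := fun v => rhs d a β c r i v y)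
      (a := t + s) (b := t + u) (k := muN r β i) (by linarith)
      ((hy.1 i).mono fun v hv => by simp only [mem_Ici]; linarith [hv.1])
      (fun v hv => hy.2.2 i v (by linarith [hv.1]))
      (fun v hv => by
        have h1 := rhs_ge hr hN hnn i v (by linarith [hv.1])
        have h2 := hnn i v (by linarith [hv.1])
        have h3 := mul_le_mul_of_nonneg_right (hmu' i).le h2
        linarith)
    simp only [mul_add, Real.exp_add] at this
    have hp := Real.exp_pos (muN r β i * t)
    refine le_of_mul_le_mul_right ?_ hp
    linarith
  · intro φ hφ hφ0 y hy t ht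
    have hnn := sol_nonneg hr hN hφ hy
    have hpos : ∀ i s, 0 ≤ s → 0 < y s i := by
      intro i s hs
      have hri := hr i
      have := exp_mono (f := fun v => y v i) (F := fun v => rhs d a β c r i v y)
        (a := 0) (b := s) (k := supR (d i)) hs
        ((hy.1 i).mono fun v hv => by simp only [mem_Ici]; linarith [hv.1])
        (fun v hv => hy.2.2 i v hv.1)
        (fun v hv => by
          have h1 := rhs_ge hr hN hnn i v hv.1
          linarith)
      have h0 : y 0 i = φ i (pt0N r hr i) := hy.2.1 i (pt0N r hr i)
      simp only [mul_zero, Real.exp_zero, mul_one, h0] at this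
      exact pos_of_mul_pos_left ((hφ0 i).trans_le this) (Real.exp_pos _).le
    have hcy : ∀ i, ContinuousOn (fun v => y v i) (Ici 0) := fun i =>
      (hy.1 i).mono fun v hv => by
        have := hr i
        simp only [mem_Ici] at hv ⊢; linarith
    have hcr : ∀ i, ContinuousOn (fun v => rhs d a β c r i v y) (Ici 0) := by
      intro i
      have hdel : ContinuousOn (fun v => y (v - r i) i) (Ici 0) :=
        (hy.1 i).comp (f := fun v => v - r i) (by fun_prop) fun v hv => by
          simp only [mem_Ici] at hv ⊢; linarith
      have c1 := (hdA i).1.continuousOn (s := Ici (0:ℝ))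
      have c2 := (hβA i).1.continuousOn (s := Ici (0:ℝ))
      have c3 := (hcA i).1.continuousOn (s := Ici (0:ℝ))
      unfold rhs
      exact ((c1.neg.mul (hcy i)).add (continuousOn_finsetSum _ fun j _ =>
        ((haA i j).1.continuousOn).mul (hcy j))).add ((c2.mul hdel).mul (c3.mul hdel).neg.rexp)
    have hlip : ∀ i, ∃ K, LipschitzWith K (segN r y t i) := by
      intro i
      have hri := hr i
      have hti := ht i
      obtain ⟨C, hC⟩ := (isCompact_Icc (a := t - r i) (b := t)).exists_bound_of_continuousOn
        ((hcr i).mono fun v hv => by simp only [mem_Ici]; linarith [hv.1])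
      refine ⟨C.toNNReal, ?_⟩
      have main : ∀ s u : Set.Icc (-(r i)) (0:ℝ), (s:ℝ) ≤ u →
          |y (t + u) i - y (t + s) i| ≤ C * (u - s) := by
        intro s u hsu
        have hs := s.2.1
        have hu := u.2.2
        have := norm_image_sub_le_of_norm_deriv_right_le_segment (f := fun v => y v i)
          (f' := fun v => rhs d a β c r i v y) (a := t + s) (b := t + u) (C := C)
          ((hcy i).mono fun v hv => by simp only [mem_Ici]; linarith [hv.1])
          (fun v hv => hy.2.2 i v (by linarith [hv.1]))
          (fun v hv => hC v ⟨by linarith [hv.1], by linarith [hv.2]⟩)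
          (t + u) ⟨by linarith, le_rfl⟩
        rw [Real.norm_eq_abs] at this
        convert this using 2
        ring
      have hC0 : 0 ≤ C := (norm_nonneg _).trans (hC t ⟨by linarith, le_rfl⟩)
      refine LipschitzWith.of_dist_le_mul fun s u => ?_
      rw [Real.coe_toNNReal _ hC0, Subtype.dist_eq, Real.dist_eq, Real.dist_eq]
      simp only [segN]
      rcases le_total (s:ℝ) u with h | h
      · rw [abs_sub_comm, abs_sub_comm (s:ℝ), abs_of_nonneg (sub_nonneg.2 h)]
        exact main s u h
      · rw [abs_of_nonneg (sub_nonneg.2 h)]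
        exact main u s h
    refine ⟨hlip, fun i => ?_, fun i => ?_⟩
    · have hri := hr i
      have hti := ht i
      exact hpos i _ (by simp only [ptnegN]; linarith)
    · have hri := hr i
      have hti := ht i
      obtain ⟨p, hp, hpm⟩ := (isCompact_Icc (a := t - r i) (b := t)).exists_isMinOn
        ⟨t, by linarith, le_rfl⟩
        ((hcy i).mono fun v hv => by simp only [mem_Ici]; linarith [hv.1])
      have hyp := hpos i p (by linarith [hp.1])
      refine ⟨(muN r β i - supR (d i)) * y p i, mul_pos (sub_pos.2 (hmu' i)) hyp, ?_⟩
      obtain ⟨K, hK⟩ := hlip i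
      have hext : LipschitzWith (K * 1) (extN hr (segN r y t) i) :=
        hK.comp (LipschitzWith.projIcc _)
      have hae := hext.ae_differentiableAt_real
      filter_upwards [ae_restrict_of_ae hae, ae_restrict_mem measurableSet_Ioo] with s hs hsI
      refine ⟨hs, ?_⟩
      have hval : ∀ v ∈ Icc (-(r i)) 0, extN hr (segN r y t) i v = y (t + v) i := by
        intro v hv
        simp only [extN, segN]
        rw [projIcc_of_mem _ hv]
      have hts : 0 ≤ t + s := by linarith [hsI.1]
      have hder0 : HasDerivWithinAt (fun v => y (t + v) i) (rhs d a β c r i (t + s) y) (Ici s) s := by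
        have h1 := hy.2.2 i (t + s) hts
        have h2 : HasDerivWithinAt (fun v => t + v) 1 (Ici s) s :=
          ((hasDerivAt_id' s).const_add t).hasDerivWithinAt
        have h3 := HasDerivWithinAt.scomp (h := fun v => t + v) s h1 h2 (fun v hv => by
          simp only [mem_Ici] at hv ⊢; linarith)
        simpa [Function.comp_def] using h3
      have hder : HasDerivWithinAt (extN hr (segN r y t) i) (rhs d a β c r i (t + s) y) (Ici s) s := by
        refine hder0.congr_of_eventuallyEq ?_ (hval s ⟨hsI.1.le, hsI.2.le⟩)
        filter_upwards [mem_nhdsWithin_of_mem_nhds (Ioo_mem_nhds hsI.1 hsI.2)] with v hv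
        exact hval v ⟨hv.1.le, hv.2.le⟩
      have heq : deriv (extN hr (segN r y t) i) s = rhs d a β c r i (t + s) y :=
        (uniqueDiffWithinAt_Ici s).eq_deriv _ hs.hasDerivAt.hasDerivWithinAt hder
      rw [heq, hval s ⟨hsI.1.le, hsI.2.le⟩]
      have h1 := rhs_ge hr hN hnn i (t + s) hts
      have h2 : y p i ≤ y (t + s) i := hpm ⟨by linarith [hsI.1], by linarith [hsI.2]⟩
      have h3 := mul_le_mul_of_nonneg_left h2 (sub_pos.2 (hmu' i)).le
      linarith

end Nicholson
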